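/- Let m ≥ 2 and let N be a symmetric lattice norm on ℝ^m (functions Fin m → ℝ). Then N has property (P) or N has property (P′): either for every t > 0, N(e₁) < N(e₁ + t·e₂), or for every t > 0, N′(e₁) < N′(e₁ + t·e₂), where N′ is the dual norm of N and e₁, e₂ are standard basis vectors. -/

import Mathlib

/-- `N` is a norm on `Fin m → ℝ`. -/
def IsNorm {m : ℕ} (N : (Fin m → ℝ) → ℝ) : Prop :=
  (∀ x, N x = 0 ↔ x = 0) ∧
  (∀ (c : ℝ) (x : Fin m → ℝ), N (c • x) = |c| * N x) ∧
  (∀ x y, N (x + y) ≤ N x + N y)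

/-- `N` is a lattice norm: it depends only on coordinatewise absolute values, monotonically. -/
def IsLatticeNorm {m : ℕ} (N : (Fin m → ℝ) → ℝ) : Prop :=
  IsNorm N ∧ (∀ x, N x = N fun i => |x i|) ∧
  ∀ x y : Fin m → ℝ, (∀ i, |x i| ≤ |y i|) → N x ≤ N y

/-- `N` is a symmetric lattice norm: a lattice norm invariant under permutations. -/
def IsSymmLatticeNorm {m : ℕ} (N : (Fin m → ℝ) → ℝ) : Prop :=
  IsLatticeNorm N ∧ ∀ (π : Equiv.Perm (Fin m)) (x : Fin m → ℝ), N (x ∘ π) = N x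

/-- The dual norm `N′(y) = sup { ∑ i, x i * y i : N x ≤ 1 }`. -/
noncomputable def dualNorm {m : ℕ} (N : (Fin m → ℝ) → ℝ) (y : Fin m → ℝ) : ℝ :=
  sSup {s : ℝ | ∃ x : Fin m → ℝ, N x ≤ 1 ∧ s = ∑ i, x i * y i}

theorem coord_bound_aux {m : ℕ} (N : (Fin m → ℝ) → ℝ) (hN : IsSymmLatticeNorm N)
    (i : Fin m) : 0 < N (Pi.single i (1 : ℝ)) ∧
      ∀ x, N x ≤ 1 → x i ≤ 1 / N (Pi.single i (1 : ℝ)) := by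
  obtain ⟨⟨⟨h0, hs, ht⟩, ha, hmono⟩, hp⟩ := hN
  have hz : N 0 = 0 := (h0 0).2 rfl
  have hpos : 0 < N (Pi.single i (1 : ℝ)) := by
    have h1 : N 0 ≤ N (Pi.single i (1 : ℝ)) := hmono _ _ (fun k => by simp)
    have h2 : N (Pi.single i (1 : ℝ)) ≠ 0 := fun h => by
      have := congrFun ((h0 _).1 h) i
      simp at this
    rw [hz] at h1
    exact lt_of_le_of_ne h1 (Ne.symm h2)
  refine ⟨hpos, fun x hx => ?_⟩
  have h1 : N (x i • Pi.single i (1 : ℝ)) ≤ N x := hmono _ _ (fun k => by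
    by_cases hk : k = i
    · subst hk; simp
    · simp [hk])
  rw [hs] at h1
  rw [le_div_iff₀ hpos]
  have := mul_le_mul_of_nonneg_right (le_abs_self (x i)) hpos.le
  linarith

theorem dual_strict_aux {m : ℕ} (N : (Fin m → ℝ) → ℝ) (hN : IsSymmLatticeNorm N)
    (i j : Fin m) (hij : i ≠ j) (t : ℝ) (ht : 0 < t)
    (h : N (Pi.single i (1 : ℝ) + t • (Pi.single j (1 : ℝ) : Fin m → ℝ)) ≤
      N (Pi.single i (1 : ℝ))) (s : ℝ) (hs : 0 < s) :
    dualNorm N (Pi.single i (1 : ℝ)) <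
      dualNorm N (Pi.single i (1 : ℝ) + s • (Pi.single j (1 : ℝ) : Fin m → ℝ)) := by
  obtain ⟨hi, hi'⟩ := coord_bound_aux N hN i
  obtain ⟨hj, hj'⟩ := coord_bound_aux N hN j
  have hsum : ∀ x : Fin m → ℝ,
      ∑ k, x k * ((Pi.single i (1 : ℝ) + s • Pi.single j (1 : ℝ) : Fin m → ℝ)) k
        = x i + s * x j := by
    intro x
    simp [mul_add, Finset.sum_add_distrib, Pi.single_apply, mul_comm]
  have hle : dualNorm N (Pi.single i (1 : ℝ)) ≤ 1 / N (Pi.single i (1 : ℝ)) := by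
    apply Real.sSup_le
    · rintro _ ⟨x, hx, rfl⟩
      simpa [Pi.single_apply] using hi' x hx
    · positivity
  set a := N (Pi.single i (1 : ℝ)) with ha
  have hge : a⁻¹ + s * (a⁻¹ * t) ≤
      dualNorm N (Pi.single i (1 : ℝ) + s • (Pi.single j (1 : ℝ) : Fin m → ℝ)) := by
    apply le_csSup
    · refine ⟨1 / a + s * (1 / N (Pi.single j (1 : ℝ))), ?_⟩
      rintro _ ⟨x, hx, rfl⟩
      rw [hsum]
      have := mul_le_mul_of_nonneg_left (hj' x hx) hs.le
      linarith [hi' x hx]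
    · refine ⟨a⁻¹ • (Pi.single i (1 : ℝ) + t • (Pi.single j (1 : ℝ) : Fin m → ℝ)), ?_, ?_⟩
      · rw [hN.1.1.2.1, abs_of_pos (inv_pos.2 hi), inv_mul_le_iff₀ hi]
        linarith
      · rw [hsum]
        simp [hij, hij.symm]
  have : 0 < s * (a⁻¹ * t) := by positivity
  rw [one_div] at hle
  linarith

/-- Every symmetric lattice norm has property (P) or property (P′). -/
theorem symmetric_norm_has_property_P_or_P'
    {m : ℕ} (hm : 2 ≤ m) (N : (Fin m → ℝ) → ℝ)
    (hN : IsSymmLatticeNorm N) :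
    (∀ t : ℝ, 0 < t →
      N (Pi.single (⟨0, by omega⟩ : Fin m) (1 : ℝ)) <
      N (Pi.single (⟨0, by omega⟩ : Fin m) (1 : ℝ) +
        t • (Pi.single (⟨1, by omega⟩ : Fin m) (1 : ℝ) : Fin m → ℝ))) ∨
    (∀ t : ℝ, 0 < t →
      dualNorm N (Pi.single (⟨0, by omega⟩ : Fin m) (1 : ℝ)) <
      dualNorm N (Pi.single (⟨0, by omega⟩ : Fin m) (1 : ℝ) +
        t • (Pi.single (⟨1, by omega⟩ : Fin m) (1 : ℝ) : Fin m → ℝ))) := by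
  by_cases hP : ∀ t : ℝ, 0 < t →
      N (Pi.single (⟨0, by omega⟩ : Fin m) (1 : ℝ)) <
      N (Pi.single (⟨0, by omega⟩ : Fin m) (1 : ℝ) +
        t • (Pi.single (⟨1, by omega⟩ : Fin m) (1 : ℝ) : Fin m → ℝ))
  · exact Or.inl hP
  · right
    push Not at hP
    obtain ⟨t, ht, h⟩ := hP
    exact fun s hs => dual_strict_aux N hN _ _ (by simp) t ht h s hs
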